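/- Let k be a commutative ring with unity, N ≥ 2 an integer, and q ∈ k a primitive N-th root of unity. For all integers t, l with 1 ≤ t ≤ N−1 and 0 ≤ l ≤ N−t, one has (−1)^l · q^{lt + l(l−1)/2} · [N−t choose l] = [l+t−1 choose l] in k. In particular (taking t = 1), (−1)^l · q^{l(l+1)/2} · [N−1 choose l] = 1 for every 0 ≤ l ≤ N−1. -/

import Mathlib

/-- The `q`-integer `[m] = 1 + q + ⋯ + q^{m-1}`. -/
def qInt {k : Type*} [CommRing k] (q : k) (m : ℕ) : k := ∑ i ∈ Finset.range m, q ^ i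

/-- The `q`-factorial `[m]! = [m][m-1]⋯[1]`, with `[0]! = 1`. -/
def qFact {k : Type*} [CommRing k] (q : k) (m : ℕ) : k := ∏ i ∈ Finset.range m, qInt q (i + 1)

/-- `QBinomSpec q N m l c` says that `c` is *the* `q`-binomial coefficient `[m choose l]`
(for `0 ≤ l ≤ m ≤ N`): in the special cases `(l,m) = (0,N), (N,N)` it is `1` by convention,
and otherwise it is characterized by `[l]! ⬝ [m-l]! ⬝ c = [m]!`. -/
def QBinomSpec {k : Type*} [CommRing k] (q : k) (N m l : ℕ) (c : k) : Prop :=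
  ((m = N ∧ (l = 0 ∨ l = N)) → c = 1) ∧
  (¬(m = N ∧ (l = 0 ∨ l = N)) → qFact q l * qFact q (m - l) * c = qFact q m)

theorem qInt_mul_sub {k : Type*} [CommRing k] (q : k) (m : ℕ) :
    qInt q m * (q - 1) = q ^ m - 1 := by
  unfold qInt
  exact geom_sum_mul q m

theorem qFact_succ' {k : Type*} [CommRing k] (q : k) (m : ℕ) :
    qFact q (m + 1) = qFact q m * qInt q (m + 1) := by
  unfold qFact
  exact Finset.prod_range_succ _ m

theorem qFact_mem {k : Type*} [CommRing k] (N : ℕ) (q : k)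
    (hq2 : ∀ l : ℕ, 1 ≤ l → l ≤ N - 1 → q ^ l - 1 ∈ nonZeroDivisors k)
    (m : ℕ) (hm : m ≤ N - 1) : qFact q m ∈ nonZeroDivisors k := by
  unfold qFact
  refine Submonoid.prod_mem _ fun i hi => ?_
  have hi' := Finset.mem_range.1 hi
  have h := hq2 (i + 1) (by omega) (by omega)
  rw [← qInt_mul_sub] at h
  exact (mul_mem_nonZeroDivisors.1 h).1

theorem tri_step (l : ℕ) : (l + 1) * (l + 1 - 1) / 2 = l * (l - 1) / 2 + l :=
  Nat.triangle_succ l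

theorem qFact_key {k : Type*} [CommRing k] (N : ℕ) (q : k)
    (hq1 : q ^ N = 1) (hq : q - 1 ∈ nonZeroDivisors k) (s l : ℕ) :
    ∀ r : ℕ, s + 1 + l + r = N →
    (-1 : k) ^ l * q ^ (l * (s + 1) + l * (l - 1) / 2) * (qFact q (l + r) * qFact q s)
      = qFact q r * qFact q (l + s) := by
  induction l with
  | zero => intro r _; simp
  | succ l ih =>
    intro r hr
    have h1 := ih (r + 1) (by omega)
    have h2 : - q ^ (s + 1 + l) * qInt q (r + 1) = qInt q (l + s + 1) := by
      rw [← mul_cancel_right_mem_nonZeroDivisors hq, mul_assoc, qInt_mul_sub, qInt_mul_sub]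
      have h3 : q ^ (s + 1 + l) * q ^ (r + 1) = 1 := by
        rw [← pow_add, ← hq1]; congr 1; omega
      have h4 : l + s + 1 = s + 1 + l := by omega
      rw [h4]
      linear_combination -h3
    rw [tri_step, show l + 1 + r = l + (r + 1) by omega, show l + 1 + s = l + s + 1 by omega,
      qFact_succ', ← h2,
      show (l + 1) * (s + 1) + (l * (l - 1) / 2 + l)
        = (l * (s + 1) + l * (l - 1) / 2) + (s + 1 + l) by ring, pow_add q, pow_succ (-1 : k)]
    rw [qFact_succ' q r] at h1
    linear_combination (- q ^ (s + 1 + l)) * h1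

/-- for `1 ≤ t ≤ N−1` and `0 ≤ l ≤ N−t`,
`(−1)^l ⬝ q^{lt + l(l−1)/2} ⬝ [N−t choose l] = [l+t−1 choose l]`; in particular for `t = 1`,
`(−1)^l ⬝ q^{l(l+1)/2} ⬝ [N−1 choose l] = 1` for `0 ≤ l ≤ N−1`. -/
theorem q_binom_inversion
    {k : Type*} [CommRing k] (N : ℕ) (hN : 2 ≤ N) (q : k)
    (hq1 : q ^ N = 1)
    (hq2 : ∀ l : ℕ, 1 ≤ l → l ≤ N - 1 → q ^ l - 1 ∈ nonZeroDivisors k)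
    (t l : ℕ) (ht1 : 1 ≤ t) (htN : t ≤ N - 1) (hl : l ≤ N - t)
    (c₁ c₂ : k)
    (hc₁ : QBinomSpec q N (N - t) l c₁)
    (hc₂ : QBinomSpec q N (l + t - 1) l c₂) :
    (-1 : k) ^ l * q ^ (l * t + l * (l - 1) / 2) * c₁ = c₂ ∧
    (t = 1 → (-1 : k) ^ l * q ^ (l * (l + 1) / 2) * c₁ = 1) := by
  obtain ⟨s, rfl⟩ : ∃ s, t = s + 1 := ⟨t - 1, by omega⟩
  obtain ⟨r, hr⟩ : ∃ r, s + 1 + l + r = N := ⟨N - (s + 1) - l, by omega⟩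
  have h1 := hc₁.2 (by omega)
  have h2 := hc₂.2 (by omega)
  rw [show N - (s + 1) = l + r by omega, show l + r - l = r by omega] at h1
  rw [show l + (s + 1) - 1 = l + s by omega, show l + s - l = s by omega] at h2
  have hq : q - 1 ∈ nonZeroDivisors k := by simpa using hq2 1 le_rfl (by omega)
  have key := qFact_key N q hq1 hq s l r hr
  have hl' := qFact_mem N q hq2 l (by omega)
  have hr' := qFact_mem N q hq2 r (by omega)
  have hs' := qFact_mem N q hq2 s (by omega)
  have main : (-1 : k) ^ l * q ^ (l * (s + 1) + l * (l - 1) / 2) * c₁ = c₂ := by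
    rw [← mul_cancel_left_mem_nonZeroDivisors (mul_mem (mul_mem hl' hr') hs')]
    rw [← h1, ← h2] at key
    linear_combination key
  refine ⟨main, fun hs => ?_⟩
  obtain rfl : s = 0 := by omega
  have h3 : l * (l + 1) / 2 = l * (0 + 1) + l * (l - 1) / 2 := by
    have := tri_step l
    rw [Nat.add_sub_cancel, mul_comm (l + 1) l] at this
    omega
  rw [h3, main, ← mul_cancel_left_mem_nonZeroDivisors hl']
  simpa [qFact] using h2
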